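/- arXiv:1307.3574 — 2 statements merged into one kernel-verified Lean document; each statement's English description precedes it below -/
import Mathlib

section
/- Let U, V be finite-dimensional vector spaces over a field K, and S a linear subspace of L(U,V) with codim S ≤ dim V − 2. Then every range-compatible group homomorphism F : S → V is local, i.e., there exists x ∈ U with F(s) = s(x) for all s ∈ S. -/
theorem aux_avoid {K V : Type*} [Field K] [AddCommGroup V] [Module K V]
    (A B : Submodule K V) (hA : A ≠ ⊤) (hB : B ≠ ⊤) : ∃ v, v ∉ A ∧ v ∉ B := by
  obtain ⟨a, ha⟩ : ∃ a, a ∉ A := by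
    by_contra! h; exact hA (eq_top_iff.2 fun x _ => h x)
  obtain ⟨b, hb⟩ : ∃ b, b ∉ B := by
    by_contra! h; exact hB (eq_top_iff.2 fun x _ => h x)
  by_cases h1 : a ∈ B
  · by_cases h2 : b ∈ A
    · refine ⟨a + b, fun h => ha ?_, fun h => hb ?_⟩
      · simpa using A.sub_mem h h2
      · simpa using B.sub_mem h h1
    · exact ⟨b, h2, hb⟩
  · exact ⟨a, ha, h1⟩

/-- An additive map preserving every line in dimension at least two is a homothety. -/
theorem aux_scalar {K V : Type*} [Field K] [AddCommGroup V] [Module K V]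
    [FiniteDimensional K V] (hV : 2 ≤ Module.finrank K V) (G : V →+ V)
    (hG : ∀ v, ∃ c : K, G v = c • v) : ∃ c : K, ∀ v, G v = c • v := by
  have key : ∀ v w : V, v ≠ 0 → w ∉ Submodule.span K {v} → ∀ c : K, G v = c • v →
      G w = c • w := by
    intro v w hv hw c hc
    obtain ⟨d, hd⟩ := hG w
    obtain ⟨e, he⟩ := hG (v + w)
    rw [map_add, hc, hd] at he
    have h1 : (d - e) • w = (e - c) • v := by
      rw [sub_smul, sub_smul, sub_eq_sub_iff_add_eq_add, ← smul_add, add_comm v w] at *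
      rw [add_comm, he]
    have hde : d - e = 0 := by
      by_contra hne
      apply hw
      rw [Submodule.mem_span_singleton]
      refine ⟨(d - e)⁻¹ * (e - c), ?_⟩
      rw [mul_smul, ← h1, smul_smul, inv_mul_cancel₀ hne, one_smul]
    rw [hde, zero_smul] at h1
    have hec : e - c = 0 := (smul_eq_zero.1 h1.symm).resolve_right hv
    rw [hd, sub_eq_zero.1 hde, sub_eq_zero.1 hec]
  have hspan : ∀ v : V, ∃ w, w ∉ Submodule.span K {v} := by
    intro v
    by_contra! h
    have ht : Submodule.span K {v} = ⊤ := eq_top_iff.2 fun x _ => h x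
    have := finrank_span_le_card (R := K) ({v} : Set V)
    rw [ht, finrank_top] at this
    simp at this
    omega
  obtain ⟨v, hv⟩ := hspan 0
  have hv0 : v ≠ 0 := by rintro rfl; exact hv (Submodule.zero_mem _)
  obtain ⟨c, hc⟩ := hG v
  obtain ⟨w, hw⟩ := hspan v
  have hw0 : w ≠ 0 := by rintro rfl; exact hw (Submodule.zero_mem _)
  have hwc := key v w hv0 hw c hc
  refine ⟨c, fun u => ?_⟩
  by_cases hu : u ∈ Submodule.span K {v}
  · by_cases hu0 : u = 0
    · simp [hu0]
    apply key w u hw0 _ c hwc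
    intro hu'
    obtain ⟨a, rfl⟩ := Submodule.mem_span_singleton.1 hu
    obtain ⟨b, hb⟩ := Submodule.mem_span_singleton.1 hu'
    have hb0 : b ≠ 0 := by rintro rfl; rw [zero_smul] at hb; exact hu0 hb.symm
    apply hw
    rw [Submodule.mem_span_singleton]
    refine ⟨b⁻¹ * a, ?_⟩
    rw [mul_smul, ← hb, smul_smul, inv_mul_cancel₀ hb0, one_smul]
  · exact key v u hv0 hu c hc

theorem aux_full {K U V : Type*} [Field K] [AddCommGroup U] [Module K U]
    [AddCommGroup V] [Module K V] [FiniteDimensional K U] [FiniteDimensional K V]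
    (hV : 2 ≤ Module.finrank K V)
    (F : (U →ₗ[K] V) →+ V)
    (hrc : ∀ s, F s ∈ LinearMap.range s) :
    ∃ x : U, ∀ s, F s = s x := by
  have h1 : ∀ φ : U →ₗ[K] K, ∃ c : K, ∀ v, F (φ.smulRight v) = c • v := by
    intro φ
    let G : V →+ V :=
      { toFun := fun v => F (φ.smulRight v)
        map_zero' := by simp
        map_add' := fun v w => by
          rw [← map_add]; congr 1; ext u; simp }
    refine aux_scalar hV G fun v => ?_
    obtain ⟨u, hu⟩ := hrc (φ.smulRight v)
    exact ⟨φ u, hu.symm⟩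
  let b := Module.finBasis K U
  choose c hc using fun i => h1 (b.coord i)
  refine ⟨∑ i, c i • b i, fun s => ?_⟩
  have hs : s = ∑ i, (b.coord i).smulRight (s (b i)) := by
    apply b.ext
    intro j
    simp [LinearMap.sum_apply, Finsupp.single_apply]
  conv_lhs => rw [hs]
  rw [map_sum, map_sum]
  exact Finset.sum_congr rfl fun i _ => by rw [hc, map_smul]

theorem aux_mem {K U V : Type*} [Field K] [AddCommGroup U] [Module K U]
    [AddCommGroup V] [Module K V] [FiniteDimensional K U] [FiniteDimensional K V]
    (S : Submodule K (U →ₗ[K] V))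
    (hcodim : Module.finrank K ((U →ₗ[K] V) ⧸ S) + 2 ≤ Module.finrank K V)
    (P : Submodule K V) (hP : Module.finrank K P ≤ 2) (y : U) (hy : y ≠ 0)
    (hS : ∀ s ∈ S, s y ∈ P) (t : U →ₗ[K] V) (ht : t y ∈ P) : t ∈ S := by
  have hle : S ≤ P.comap (LinearMap.applyₗ (R := K) (M := U) (M₂ := V) y) := fun s hs => hS s hs
  let f := S.mapQ P (LinearMap.applyₗ y) hle
  have hsurj : Function.Surjective f := by
    intro q
    obtain ⟨v, rfl⟩ := P.mkQ_surjective q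
    obtain ⟨φ, hφ⟩ := Module.Projective.exists_dual_ne_zero K hy
    refine ⟨S.mkQ (φ.smulRight ((φ y)⁻¹ • v)), ?_⟩
    simp [f, smul_smul, hφ]
  have h1 := LinearMap.finrank_le_finrank_of_surjective hsurj
  have h2 := P.finrank_quotient_add_finrank
  have hinj := (LinearMap.injective_iff_surjective_of_finrank_eq_finrank (f := f) (by omega)).2 hsurj
  rw [← Submodule.Quotient.mk_eq_zero]
  apply hinj
  rw [map_zero]
  simpa [f] using ht

theorem aux_main {K U : Type*} [Field K] [AddCommGroup U] [Module K U]
    [FiniteDimensional K U] (n : ℕ) : ∀ {V : Type*}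
    [AddCommGroup V] [Module K V] [FiniteDimensional K V] (_ : Module.finrank K V = n)
    (S : Submodule K (U →ₗ[K] V))
    (_ : Module.finrank K ((U →ₗ[K] V) ⧸ S) + 2 ≤ Module.finrank K V)
    (F : S →+ V)
    (_ : ∀ s : S, F s ∈ LinearMap.range (s : U →ₗ[K] V)),
    ∃ x : U, ∀ s : S, F s = (s : U →ₗ[K] V) x := by
  induction n with
  | zero => intro V _ _ _ hn S hc; omega
  | succ n ih =>
  intro V _ _ _ hn S hcodim F hrc
  by_cases hST : S = ⊤
  · subst hST
    obtain ⟨x, hx⟩ := aux_full (K := K) (U := U) (V := V) (by omega)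
      (F.comp (Submodule.topEquiv (R := K) (M := U →ₗ[K] V)).symm.toLinearMap.toAddMonoidHom)
      (fun s => hrc ⟨s, trivial⟩)
    exact ⟨x, fun s => hx s⟩
  have hpos : 0 < Module.finrank K ((U →ₗ[K] V) ⧸ S) := by
    have := Submodule.Quotient.nontrivial_iff.2 hST
    exact Module.finrank_pos
  -- the bad vectors
  let W : Submodule K V :=
    { carrier := {v | ∀ φ : U →ₗ[K] K, φ.smulRight v ∈ S}
      zero_mem' := fun φ => by simp
      add_mem' := fun {a b} ha hb φ => by
        have : φ.smulRight (a + b) = φ.smulRight a + φ.smulRight b := by ext; simp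
        rw [this]; exact S.add_mem (ha φ) (hb φ)
      smul_mem' := fun c a ha φ => by
        have : φ.smulRight (c • a) = c • φ.smulRight a := by
          ext; simp [smul_smul, mul_comm]
        rw [this]; exact S.smul_mem c (ha φ) }
  have hW : W ≠ ⊤ := by
    intro hW
    apply hST
    rw [eq_top_iff]
    intro s _
    let b := Module.finBasis K U
    have hs : s = ∑ i, (b.coord i).smulRight (s (b i)) := by
      apply b.ext
      intro j
      simp [LinearMap.sum_apply, Finsupp.single_apply]
    rw [hs]
    refine S.sum_mem fun i _ => ?_
    have : s (b i) ∈ W := by rw [hW]; trivial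
    exact this _
  have good : ∀ v, v ∉ W → ∃ x : U, ∀ s : S, F s - (s : U →ₗ[K] V) x ∈ Submodule.span K {v} := by
    intro v hv
    obtain ⟨φ, hφ⟩ : ∃ φ : U →ₗ[K] K, φ.smulRight v ∉ S := by
      by_contra! h; exact hv h
    have hv0 : v ≠ 0 := by rintro rfl; exact hv W.zero_mem
    let L := Submodule.span K {v}
    have hL : Module.finrank K L = 1 := finrank_span_singleton hv0
    have hVL := L.finrank_quotient_add_finrank
    let Φ : (U →ₗ[K] V) →ₗ[K] (U →ₗ[K] (V ⧸ L)) := LinearMap.compRight K L.mkQ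
    have hΦs : Function.Surjective Φ := by
      intro t
      obtain ⟨g, hg⟩ := L.mkQ.exists_rightInverse_of_surjective L.range_mkQ
      refine ⟨g.comp t, ?_⟩
      ext u
      exact LinearMap.congr_fun hg (t u)
    let S' := S.map Φ
    let f := S.mapQ S' Φ (Submodule.le_comap_map _ _)
    have hfs : Function.Surjective f := by
      intro q
      obtain ⟨t, rfl⟩ := S'.mkQ_surjective q
      obtain ⟨s, rfl⟩ := hΦs t
      exact ⟨S.mkQ s, rfl⟩
    have hle := LinearMap.finrank_le_finrank_of_surjective hfs
    have hne : Module.finrank K ((U →ₗ[K] V) ⧸ S) ≠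
        Module.finrank K ((U →ₗ[K] (V ⧸ L)) ⧸ S') := by
      intro h
      have hinj := (LinearMap.injective_iff_surjective_of_finrank_eq_finrank (f := f) h).2 hfs
      apply hφ
      rw [← Submodule.Quotient.mk_eq_zero]
      apply hinj
      rw [map_zero]
      have : Φ (φ.smulRight v) = 0 := by
        ext u
        change L.mkQ (φ u • v) = 0
        rw [Submodule.mkQ_apply, Submodule.Quotient.mk_eq_zero]
        exact L.smul_mem _ (Submodule.mem_span_singleton_self v)
      change S'.mkQ (Φ (φ.smulRight v)) = 0
      rw [this, map_zero]
    let r : S →+ S' := (Φ.submoduleMap S).toAddMonoidHom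
    have hr : Function.Surjective r := Φ.submoduleMap_surjective S
    let G : S →+ (V ⧸ L) := L.mkQ.toAddMonoidHom.comp F
    have hGr : r.ker ≤ G.ker := by
      intro s hs
      rw [AddMonoidHom.mem_ker] at hs ⊢
      obtain ⟨u, hu⟩ := hrc s
      change L.mkQ (F s) = 0
      rw [← hu]
      have : Φ (s : U →ₗ[K] V) = 0 := congrArg Subtype.val hs
      exact LinearMap.congr_fun this u
    let F' : S' →+ (V ⧸ L) := r.liftOfSurjective hr ⟨G, hGr⟩
    have hF' : ∀ s, F' (r s) = L.mkQ (F s) := fun s =>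
      AddMonoidHom.liftOfRightInverse_comp_apply r _ _ ⟨G, hGr⟩ s
    obtain ⟨x, hx⟩ := ih (V := V ⧸ L) (by omega) S' (by omega) F' (by
      intro t
      obtain ⟨s, rfl⟩ := hr t
      rw [hF']
      obtain ⟨u, hu⟩ := hrc s
      rw [← hu]
      exact ⟨u, rfl⟩)
    refine ⟨x, fun s => ?_⟩
    have h := hx (r s)
    rw [hF'] at h
    exact (Submodule.Quotient.eq L).1 h
  have hfin2 : ∀ a b : V, Module.finrank K (Submodule.span K {a, b}) ≤ 2 := by
    classical
    intro a b
    have := finrank_span_finset_le_card (R := K) ({a, b} : Finset V)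
    have h2 : ({a, b} : Finset V).card ≤ 2 := Finset.card_le_two
    rw [Finset.coe_pair] at this
    exact this.trans h2
  have hprop : ∀ a b : V, Submodule.span K {a, b} ≠ ⊤ := by
    intro a b h
    have := hfin2 a b
    rw [h, finrank_top] at this
    omega
  obtain ⟨v1, h1, -⟩ := aux_avoid W W hW hW
  obtain ⟨v2, h2, h21⟩ := aux_avoid W (Submodule.span K {v1, v1}) hW (hprop _ _)
  rw [Set.pair_eq_singleton] at h21
  obtain ⟨v3, h3, h312⟩ := aux_avoid W (Submodule.span K {v2, v1}) hW (hprop _ _)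
  have h31 : v3 ∉ Submodule.span K {v1} := fun h =>
    h312 (Submodule.span_mono (by simp) h)
  have h213 : v2 ∉ Submodule.span K {v3, v1} := fun h =>
    h312 (mem_span_insert_exchange h h21)
  obtain ⟨x1, hx1⟩ := good v1 h1
  obtain ⟨x2, hx2⟩ := good v2 h2
  obtain ⟨x3, hx3⟩ := good v3 h3
  have hind : ∀ a b z : V, b ∉ Submodule.span K {a} → z ∈ Submodule.span K {a} →
      z ∈ Submodule.span K {b} → z = 0 := by
    intro a b z hab ha hb
    obtain ⟨c, rfl⟩ := Submodule.mem_span_singleton.1 hb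
    by_cases hc : c = 0
    · simp [hc]
    · exact absurd ((Submodule.smul_mem_iff _ hc).1 ha) hab
  by_cases h12 : x1 = x2
  · subst h12
    exact ⟨x1, fun s => sub_eq_zero.1 (hind v1 v2 _ h21 (hx1 s) (hx2 s))⟩
  by_cases h13 : x1 = x3
  · subst h13
    exact ⟨x1, fun s => sub_eq_zero.1 (hind v1 v3 _ h31 (hx1 s) (hx3 s))⟩
  exfalso
  have hin : ∀ (a : V) (x : U), (∀ s : S, F s - (s : U →ₗ[K] V) x ∈ Submodule.span K {a}) →
      ∀ s ∈ S, s (x1 - x) ∈ Submodule.span K {a, v1} := by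
    intro a x hx s hs
    have e : s (x1 - x) = (F ⟨s, hs⟩ - s x) - (F ⟨s, hs⟩ - s x1) := by
      rw [map_sub]; abel
    rw [e]
    exact Submodule.sub_mem _ (Submodule.span_mono (by simp) (hx ⟨s, hs⟩))
      (Submodule.span_mono (by simp) (hx1 ⟨s, hs⟩))
  obtain ⟨φ, hφ⟩ := Module.Projective.exists_dual_ne_zero K (sub_ne_zero.2 h13)
  have hm := aux_mem S hcodim (Submodule.span K {v2, v1}) (hfin2 _ _) (x1 - x2)
    (sub_ne_zero.2 h12) (hin v2 x2 hx2) (φ.smulRight v2)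
    (Submodule.smul_mem _ _ (Submodule.subset_span (by simp)))
  have := hin v3 x3 hx3 _ hm
  exact h213 ((Submodule.smul_mem_iff _ hφ).1 this)

theorem stmt_4 {K U V : Type*} [Field K] [AddCommGroup U] [Module K U]
    [AddCommGroup V] [Module K V] [FiniteDimensional K U] [FiniteDimensional K V]
    (S : Submodule K (U →ₗ[K] V))
    (hcodim : Module.finrank K ((U →ₗ[K] V) ⧸ S) + 2 ≤ Module.finrank K V)
    (F : S →+ V)
    (hrc : ∀ s : S, F s ∈ LinearMap.range (s : U →ₗ[K] V)) :
    ∃ x : U, ∀ s : S, F s = (s : U →ₗ[K] V) x :=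
  aux_main _ rfl S hcodim F hrc
end

section
/- Let K be a field with more than 2 elements, and n ≥ 2, p ≥ 2 integers. Let S be a linear subspace of Mat_{n,p}(K) with codim S ≤ 2n−3. Then every range-compatible K-linear map F : S → K^n is local. -/
open TensorProduct Module

section RC
variable {K U Y W : Type*} [Field K] [AddCommGroup U] [Module K U] [AddCommGroup Y] [Module K Y]
  [AddCommGroup W] [Module K W]

noncomputable def rcEv (h : Y →ₗ[K] K) : U ⊗[K] Y →ₗ[K] U :=
  (TensorProduct.rid K U).toLinearMap ∘ₗ LinearMap.lTensor U h

lemma rcEv_tmul (h : Y →ₗ[K] K) (x : U) (y : Y) : rcEv h (x ⊗ₜ[K] y) = h y • x := by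
  simp [rcEv]

lemma rcEv_add (h k : Y →ₗ[K] K) (d : U ⊗[K] Y) : rcEv (h + k) d = rcEv h d + rcEv k d := by
  simp [rcEv, LinearMap.lTensor_add]

lemma rcEv_smul (c : K) (k : Y →ₗ[K] K) (d : U ⊗[K] Y) : rcEv (c • k) d = c • rcEv k d := by
  simp [rcEv, LinearMap.lTensor_smul]

lemma rcEv_eq_zero [FiniteDimensional K Y] (d : U ⊗[K] Y)
    (hd : ∀ h : Y →ₗ[K] K, rcEv h d = 0) : d = 0 := by
  let b := Module.finBasis K Y
  have key : ∀ d : U ⊗[K] Y, ∑ i, (rcEv (b.coord i) d) ⊗ₜ[K] (b i) = d := by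
    intro d
    induction d with
    | zero => simp
    | tmul x y =>
      simp only [rcEv_tmul, TensorProduct.smul_tmul, ← TensorProduct.tmul_sum]
      congr 1
      exact b.sum_repr y
    | add a c ha hc =>
      simp only [map_add, TensorProduct.add_tmul, Finset.sum_add_distrib, ha, hc]
  rw [← key d]
  simp [hd]

lemma rc_tmul_eq_zero {X : U} (hX : X ≠ 0) {y : Y} (h : X ⊗ₜ[K] y = 0) : y = 0 := by
  rw [← Module.forall_dual_apply_eq_zero_iff K]
  intro f
  have h1 := congrArg (rcEv f) h
  rw [rcEv_tmul, map_zero] at h1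
  exact (smul_eq_zero.1 h1).resolve_right hX

open Classical in
lemma rc_dual {ι : Type*} {v : ι → Y} (hli : LinearIndependent K v) (i : ι) :
    ∃ g : Y →ₗ[K] K, ∀ j, g (v j) = if j = i then 1 else 0 := by
  obtain ⟨g, hg⟩ := LinearMap.exists_extend ((Basis.span hli).coord i)
  refine ⟨g, fun j => ?_⟩
  have h1 : (Submodule.subtype _ ((Basis.span hli) j) : Y) = v j := by
    simp [Basis.span_apply]
  rw [← h1, ← LinearMap.comp_apply, hg]
  simp [Finsupp.single_apply]

open Classical in
lemma rc_count [FiniteDimensional K U] [FiniteDimensional K Y] (D : Submodule K (U ⊗[K] Y))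
    {X : U} (hX : X ≠ 0) (L : Submodule K Y) (hL : ∀ l ∈ L, X ⊗ₜ[K] l ∈ D) (Q : Set Y)
    (hQ : ∀ y ∈ Q, ∃ z : U, ∃ w : Y, z ∉ Submodule.span K {X} ∧ z ⊗ₜ[K] y - X ⊗ₜ[K] w ∈ D) :
    finrank K L + finrank K (Submodule.span K Q) ≤ finrank K D := by
  obtain ⟨b, hbQ, hspan, hli⟩ := exists_linearIndependent K Q
  have : Fintype b := hli.setFinite.fintype
  choose z w hz hzw using fun i : b => hQ i (hbQ i.2)
  let φ : (L × (b → K)) →ₗ[K] U ⊗[K] Y :=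
    LinearMap.coprod ((TensorProduct.mk K U Y X) ∘ₗ L.subtype)
      (Fintype.linearCombination K (fun i : b => z i ⊗ₜ[K] (i : Y) - X ⊗ₜ[K] w i))
  have hφ : ∀ a, φ a = X ⊗ₜ[K] (a.1 : Y) +
      ∑ i, a.2 i • (z i ⊗ₜ[K] (i : Y) - X ⊗ₜ[K] w i) := by
    intro a; simp [φ, Fintype.linearCombination_apply]
  have hmem : ∀ a, φ a ∈ D := by
    intro a
    rw [hφ]
    exact D.add_mem (hL _ a.1.2) (D.sum_mem fun i _ => D.smul_mem _ (hzw i))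
  have hinj : Function.Injective φ := by
    rw [← LinearMap.ker_eq_bot, LinearMap.ker_eq_bot']
    rintro ⟨l, c⟩ h0
    rw [hφ] at h0
    have hc : c = 0 := by
      funext i
      obtain ⟨g, hgb⟩ := rc_dual hli i
      have h1 := congrArg (rcEv g) h0
      simp only [map_add, map_sum, map_smul, map_sub, rcEv_tmul, hgb, map_zero, smul_sub,
        Finset.sum_sub_distrib] at h1
      simp only [ite_smul, smul_ite, one_smul, zero_smul, smul_zero, Finset.sum_ite_eq',
        Finset.mem_univ, if_true] at h1
      by_contra hci
      apply hz i
      have h2 : c i • z i ∈ Submodule.span K {X} := by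
        have : c i • z i = (∑ x, c x • g (w x) • X) - g l • X := by
          rw [← sub_eq_zero, ← h1]; abel
        rw [this]
        refine Submodule.sub_mem _ (Submodule.sum_mem _ fun x _ => ?_) ?_
        · exact Submodule.smul_mem _ _ (Submodule.smul_mem _ _ (Submodule.mem_span_singleton_self X))
        · exact Submodule.smul_mem _ _ (Submodule.mem_span_singleton_self X)
      exact (Submodule.smul_mem_iff _ hci).1 h2
    subst hc
    simp only [Pi.zero_apply, zero_smul, Finset.sum_const_zero, add_zero] at h0
    have := rc_tmul_eq_zero hX h0
    ext
    · simpa using this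
    · simp
  have h := LinearMap.finrank_le_finrank_of_injective (f := φ.codRestrict D hmem)
    (fun a b hab => hinj (congrArg Subtype.val hab))
  rw [finrank_prod, finrank_fintype_fun_eq_card] at h
  rw [← hspan, finrank_span_set_eq_card hli, Set.toFinset_card]
  convert h

/-- pointwise proportional linear maps -/
lemma rc_scalar (Φ G : Y →ₗ[K] W) (h : ∀ y, ∃ c : K, Φ y = c • G y) : ∃ c : K, Φ = c • G := by
  by_cases hG : G = 0
  · refine ⟨0, ?_⟩
    ext y
    obtain ⟨c, hc⟩ := h y
    simp [hc, hG]
  obtain ⟨y1, hy1⟩ : ∃ y, G y ≠ 0 := by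
    by_contra! h'
    exact hG (LinearMap.ext h')
  obtain ⟨c, hc⟩ := h y1
  refine ⟨c, LinearMap.ext fun y => ?_⟩
  rw [LinearMap.smul_apply]
  by_cases hs : ∃ s : K, s • G y1 = G y
  · obtain ⟨s, hs⟩ := hs
    obtain ⟨e, he⟩ := h (y - s • y1)
    rw [map_sub, map_sub, map_smul, map_smul, hs, sub_self, smul_zero, sub_eq_zero] at he
    rw [he, hc, ← hs, smul_comm]
  · obtain ⟨e, he⟩ := h (y + y1)
    obtain ⟨e', he'⟩ := h y
    rw [map_add, map_add, he', hc] at he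
    have h1 : (e' - e) • G y = (e - c) • G y1 := by
      rw [sub_smul, sub_smul]
      rw [smul_add] at he
      rw [sub_eq_sub_iff_add_eq_add, he, add_comm]
    have h2 : e' = e := by
      by_contra hne
      apply hs
      refine ⟨(e' - e)⁻¹ * (e - c), ?_⟩
      rw [mul_smul, ← h1, smul_smul, inv_mul_cancel₀ (sub_ne_zero.2 hne), one_smul]
    have h3 : e = c := by
      rw [h2, sub_self, zero_smul] at h1
      exact sub_eq_zero.1 ((smul_eq_zero.1 h1.symm).resolve_right hy1)
    rw [he', h2, h3]


lemma rc_glue0 [FiniteDimensional K U] [FiniteDimensional K Y] (hK : ∃ a : K, a ≠ 0 ∧ a ≠ 1)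
    (T : U ⊗[K] Y →ₗ[K] W) (Φ : Y →ₗ[K] W) (hrc : ∀ y, ∃ x : U, Φ y = T (x ⊗ₜ[K] y))
    (h1 h2 : Y →ₗ[K] K) (e1 e2 : Y) (h11 : h1 e1 = 1) (h12 : h1 e2 = 0) (h21 : h2 e1 = 0)
    (h22 : h2 e2 = 1) (X : U) (hΦ1 : ∀ y, h1 y = 0 → Φ y = 0)
    (hΦ2 : ∀ y, h2 y = 0 → Φ y = T (X ⊗ₜ[K] y))
    (hD : finrank K (LinearMap.ker T) + 3 ≤ 2 * finrank K Y) :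
    ∃ X' : U, ∀ y, Φ y = T (X' ⊗ₜ[K] y) := by
  by_contra hloc
  obtain ⟨A, hA⟩ : ∃ A, A = T (X ⊗ₜ[K] e1) := ⟨_, rfl⟩
  obtain ⟨B, hB⟩ : ∃ B, B = T (X ⊗ₜ[K] e2) := ⟨_, rfl⟩
  have hΦ : ∀ y, Φ y = h1 y • A := by
    intro y
    have h := hΦ1 (y - h1 y • e1) (by simp [h11])
    rw [map_sub, map_smul, hΦ2 e1 h21, sub_eq_zero, ← hA] at h
    exact h
  have hTX : ∀ y, T (X ⊗ₜ[K] y) = h1 y • A + h2 y • B := by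
    intro y
    have h := hΦ2 (y - h1 y • e1 - h2 y • e2) (by simp [h21, h22])
    rw [hΦ1 _ (by simp [h11, h12])] at h
    simp only [TensorProduct.tmul_sub, TensorProduct.tmul_smul, map_sub, map_smul, ← hA, ← hB] at h
    rw [sub_sub] at h
    exact (sub_eq_zero.1 h.symm)
  have hA0 : A ≠ 0 := by
    intro h
    exact hloc ⟨0, fun y => by simp [hΦ, h]⟩
  have hB0 : B ≠ 0 := by
    intro h
    exact hloc ⟨X, fun y => by simp [hΦ, hTX, h]⟩
  have hX : X ≠ 0 := by
    rintro rfl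
    exact hA0 (by simp [hA])
  let G : Y →ₗ[K] W := T ∘ₗ TensorProduct.mk K U Y X
  have hG : ∀ y, G y = h1 y • A + h2 y • B := fun y => hTX y
  have hcount := rc_count (LinearMap.ker T) hX (LinearMap.ker G) (fun l hl => hl)
  have hrn := LinearMap.finrank_range_add_finrank_ker G
  have key : ∀ y, (∀ s : K, h1 y • A ≠ s • (h1 y • A + h2 y • B)) →
      ∃ z : U, ∃ w : Y, z ∉ Submodule.span K {X} ∧ z ⊗ₜ[K] y - X ⊗ₜ[K] w ∈ LinearMap.ker T := by
    intro y hy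
    obtain ⟨x, hx⟩ := hrc y
    refine ⟨x, h1 y • e1, ?_, ?_⟩
    · intro hxs
      obtain ⟨s, rfl⟩ := Submodule.mem_span_singleton.1 hxs
      apply hy s
      rw [← hTX, ← hΦ, hx, ← map_smul, TensorProduct.smul_tmul']
    · rw [LinearMap.mem_ker, map_sub, ← hx, hΦ, TensorProduct.tmul_smul, map_smul, hA, sub_self]
  by_cases hdep : ∃ μ : K, B = μ • A
  · obtain ⟨μ, hμ⟩ := hdep
    have hμ0 : μ ≠ 0 := by
      rintro rfl
      exact hB0 (by simp [hμ])
    have hr : finrank K (LinearMap.range G) ≤ 1 := by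
      refine le_trans (Submodule.finrank_mono (t := Submodule.span K {A}) ?_)
        (finrank_span_singleton hA0).le
      rintro _ ⟨y, rfl⟩
      rw [hG, hμ]
      have := Submodule.mem_span_singleton_self (R := K) A
      exact Submodule.add_mem _ (Submodule.smul_mem _ _ this)
        (Submodule.smul_mem _ _ (Submodule.smul_mem _ _ this))
    have hc := hcount {y | G y = 0 ∧ h1 y ≠ 0} (by
      rintro y ⟨hy0, hy1⟩
      apply key
      intro s hs
      rw [← hG, hy0, smul_zero] at hs
      exact (smul_ne_zero hy1 hA0) hs)
    have hq : G (μ • e1 - e2) = 0 := by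
      rw [hG]; simp [h11, h12, h21, h22, hμ]
    have hle : LinearMap.ker G ≤ Submodule.span K {y | G y = 0 ∧ h1 y ≠ 0} := by
      intro y hy
      have hy : G y = 0 := hy
      by_cases hy1 : h1 y = 0
      · have ha : y + (μ • e1 - e2) ∈ Submodule.span K {y | G y = 0 ∧ h1 y ≠ 0} :=
          Submodule.subset_span ⟨by rw [map_add, hy, hq, add_zero], by simp [hy1, h11, h12, hμ0]⟩
        have hb : (μ • e1 - e2) ∈ Submodule.span K {y | G y = 0 ∧ h1 y ≠ 0} :=
          Submodule.subset_span ⟨hq, by simp [h11, h12, hμ0]⟩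
        simpa using Submodule.sub_mem _ ha hb
      · exact Submodule.subset_span ⟨hy, hy1⟩
    have := Submodule.finrank_mono hle
    omega
  · have hind : ∀ a b : K, a • A + b • B = 0 → b = 0 := by
      intro a b hab
      by_contra hb
      apply hdep
      refine ⟨b⁻¹ * (-a), ?_⟩
      rw [mul_smul, neg_smul, ← eq_neg_of_add_eq_zero_right hab, smul_smul, inv_mul_cancel₀ hb,
        one_smul]
    have hr : finrank K (LinearMap.range G) ≤ 2 := by
      classical
      refine le_trans (Submodule.finrank_mono (t := Submodule.span K (({A, B} : Finset W) : Set W)) ?_)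
        ((finrank_span_finset_le_card _).trans Finset.card_le_two)
      rintro _ ⟨y, rfl⟩
      rw [hG]
      exact Submodule.add_mem _ (Submodule.smul_mem _ _ (Submodule.subset_span (by simp)))
        (Submodule.smul_mem _ _ (Submodule.subset_span (by simp)))
    have hc := hcount {y | h1 y ≠ 0 ∧ h2 y ≠ 0} (by
      rintro y ⟨hy1, hy2⟩
      apply key
      intro s hs
      have h3 := hind (s * h1 y - h1 y) (s * h2 y) (by
        rw [sub_smul, mul_smul, mul_smul]
        nth_rw 2 [hs]
        rw [smul_add]; abel)
      have h4 : s = 0 := (mul_eq_zero.1 h3).resolve_right hy2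
      rw [h4, zero_smul] at hs
      exact (smul_ne_zero hy1 hA0) hs)
    have htop : Submodule.span K {y | h1 y ≠ 0 ∧ h2 y ≠ 0} = ⊤ := by
      obtain ⟨a, ha0, ha1⟩ := hK
      set P := Submodule.span K {y | h1 y ≠ 0 ∧ h2 y ≠ 0}
      have hm : ∀ y, h1 y ≠ 0 → h2 y ≠ 0 → y ∈ P := fun y hy hy' => Submodule.subset_span ⟨hy, hy'⟩
      have p1 : e1 + e2 ∈ P := hm _ (by simp [h11, h12]) (by simp [h21, h22])
      have p2 : e1 + a • e2 ∈ P := hm _ (by simp [h11, h12]) (by simp [h21, h22, ha0])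
      have p3 : e2 ∈ P := by
        have h := P.sub_mem p2 p1
        have h' : e1 + a • e2 - (e1 + e2) = (a - 1) • e2 := by rw [sub_smul, one_smul]; abel
        rw [h'] at h
        exact (P.smul_mem_iff (sub_ne_zero.2 ha1)).1 h
      have p4 : e1 ∈ P := by simpa using P.sub_mem p1 p3
      rw [eq_top_iff]
      intro y _
      have hl : y - h1 y • e1 - h2 y • e2 + (e1 + e2) ∈ P :=
        hm _ (by simp [h11, h12]) (by simp [h21, h22])
      have := P.add_mem (P.add_mem (P.sub_mem hl p1) (P.smul_mem (h1 y) p4)) (P.smul_mem (h2 y) p3)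
      convert this using 1
      abel
    rw [htop, finrank_top] at hc
    omega

lemma rc_glue [FiniteDimensional K U] [FiniteDimensional K Y] (hK : ∃ a : K, a ≠ 0 ∧ a ≠ 1)
    (T : U ⊗[K] Y →ₗ[K] W) (Φ : Y →ₗ[K] W) (hrc : ∀ y, ∃ x : U, Φ y = T (x ⊗ₜ[K] y))
    (h1 h2 : Y →ₗ[K] K) (hli : LinearIndependent K ![h1, h2]) (X1 X2 : U)
    (hΦ1 : ∀ y, h1 y = 0 → Φ y = T (X1 ⊗ₜ[K] y))
    (hΦ2 : ∀ y, h2 y = 0 → Φ y = T (X2 ⊗ₜ[K] y))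
    (hD : finrank K (LinearMap.ker T) + 3 ≤ 2 * finrank K Y) :
    ∃ X' : U, ∀ y, Φ y = T (X' ⊗ₜ[K] y) := by
  obtain ⟨g1, hg1⟩ := rc_dual hli 0
  obtain ⟨g2, hg2⟩ := rc_dual hli 1
  obtain ⟨e1, rfl⟩ := (Module.evalEquiv K Y).surjective g1
  obtain ⟨e2, rfl⟩ := (Module.evalEquiv K Y).surjective g2
  obtain ⟨X, hX⟩ := rc_glue0 hK T (Φ - T ∘ₗ TensorProduct.mk K U Y X1) (by
      intro y
      obtain ⟨x, hx⟩ := hrc y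
      exact ⟨x - X1, by simp [hx, TensorProduct.sub_tmul]⟩) h1 h2 e1 e2
    (by simpa using hg1 0) (by simpa using hg2 0) (by simpa using hg1 1) (by simpa using hg2 1)
    (X2 - X1) (by intro y hy; simp [hΦ1 y hy])
    (by intro y hy; simp [hΦ2 y hy, TensorProduct.sub_tmul]) hD
  refine ⟨X + X1, fun y => ?_⟩
  have := hX y
  simp only [LinearMap.sub_apply, LinearMap.comp_apply, TensorProduct.mk_apply] at this
  rw [TensorProduct.add_tmul, map_add, ← this, sub_add_cancel]

lemma rc_det {x y : U} (h : ¬ LinearIndependent K ![x, y]) (f1 f2 : U →ₗ[K] K) :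
    f1 x * f2 y - f1 y * f2 x = 0 := by
  by_contra hne
  apply h
  rw [LinearIndependent.pair_iff]
  intro s t hst
  have a1 := congrArg f1 hst
  have a2 := congrArg f2 hst
  simp only [map_add, map_smul, smul_eq_mul, map_zero] at a1 a2
  constructor
  · refine (mul_eq_zero.1 (?_ : s * (f1 x * f2 y - f1 y * f2 x) = 0)).resolve_right hne
    linear_combination f2 y * a1 - f1 y * a2
  · refine (mul_eq_zero.1 (?_ : t * (f1 x * f2 y - f1 y * f2 x) = 0)).resolve_right hne
    linear_combination f1 x * a2 - f2 x * a1

def rcGood (D : Submodule K (U ⊗[K] Y)) (h : Y →ₗ[K] K) : Prop :=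
  ∃ d1 ∈ D, ∃ d2 ∈ D, LinearIndependent K ![rcEv h d1, rcEv h d2]

lemma rc_few (hK : ∃ a : K, a ≠ 0 ∧ a ≠ 1) (D : Submodule K (U ⊗[K] Y)) (h0 k : Y →ₗ[K] K)
    (hg : rcGood D h0) (hk : ¬ rcGood D k) (ht : ∀ t : K, t ≠ 0 → ¬ rcGood D (h0 + t • k)) :
    False := by
  obtain ⟨d1, m1, d2, m2, hli⟩ := hg
  obtain ⟨f1, hf1⟩ := rc_dual hli 0
  obtain ⟨f2, hf2⟩ := rc_dual hli 1
  have a1 : f1 (rcEv h0 d1) = 1 := by simpa using hf1 0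
  have a2 : f1 (rcEv h0 d2) = 0 := by simpa using hf1 1
  have a3 : f2 (rcEv h0 d1) = 0 := by simpa using hf2 0
  have a4 : f2 (rcEv h0 d2) = 1 := by simpa using hf2 1
  have hdet : ∀ h, ¬ rcGood D h →
      f1 (rcEv h d1) * f2 (rcEv h d2) - f1 (rcEv h d2) * f2 (rcEv h d1) = 0 :=
    fun h hh => rc_det (fun hl => hh ⟨d1, m1, d2, m2, hl⟩) f1 f2
  obtain ⟨a, ha0, ha1⟩ := hK
  have b0 := hdet k hk
  have b1 := hdet _ (ht 1 one_ne_zero)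
  have b2 := hdet _ (ht a ha0)
  simp only [rcEv_add, rcEv_smul, map_add, map_smul, a1, a2, a3, a4, smul_eq_mul] at b1 b2
  apply ha1
  linear_combination a * b1 - b2 - (a - a ^ 2) * b0

lemma rc_two [FiniteDimensional K Y] (hK : ∃ a : K, a ≠ 0 ∧ a ≠ 1) (hY : 2 ≤ finrank K Y)
    (D : Submodule K (U ⊗[K] Y)) (h0 : Y →ₗ[K] K) (hg : rcGood D h0) :
    ∃ k : Y →ₗ[K] K, rcGood D k ∧ LinearIndependent K ![h0, k] := by
  by_contra! hno
  have h00 : h0 ≠ 0 := by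
    rintro rfl
    obtain ⟨d1, m1, d2, m2, hli⟩ := hg
    exact hli.ne_zero 0 (by simp [rcEv])
  obtain ⟨k, hk⟩ : ∃ k, k ∉ Submodule.span K {h0} := by
    by_contra! hall
    have : Submodule.span K {h0} = ⊤ := eq_top_iff.2 fun x _ => hall x
    have h1 := finrank_span_singleton (K := K) h00
    rw [this, finrank_top] at h1
    have : finrank K (Dual K Y) = finrank K Y := Subspace.dual_finrank_eq
    unfold Dual at this
    omega
  have hlin : ∀ x, x ∉ Submodule.span K {h0} → LinearIndependent K ![h0, x] := by
    intro x hx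
    rw [LinearIndependent.pair_iff' h00]
    intro a ha
    exact hx (Submodule.mem_span_singleton.2 ⟨a, ha⟩)
  refine rc_few hK D h0 k hg (fun h => hno k h (hlin k hk)) fun t ht h => hno _ h (hlin _ ?_)
  intro hm
  apply hk
  have := Submodule.sub_mem _ hm (Submodule.mem_span_singleton_self h0)
  rw [add_sub_cancel_left] at this
  exact (Submodule.smul_mem_iff _ ht).1 this

lemma rc_line [FiniteDimensional K U] [FiniteDimensional K Y] (D : Submodule K (U ⊗[K] Y))
    (hno : ∀ h, ¬ rcGood D h) (hD : 2 ≤ finrank K D) :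
    ∃ u : U, ∀ d ∈ D, ∀ h, rcEv h d ∈ Submodule.span K {u} := by
  have H : ∀ h, ∀ d ∈ D, ∀ d' ∈ D, rcEv h d ≠ 0 → ∃ c : K, c • rcEv h d = rcEv h d' := by
    intro h d hd d' hd' hne
    by_contra! hc
    exact hno h ⟨d, hd, d', hd', (LinearIndependent.pair_iff' hne).2 hc⟩
  by_contra! hcon
  obtain ⟨d1, m1, h1, hu⟩ := hcon 0
  obtain ⟨u, hu'⟩ : ∃ u, u = rcEv h1 d1 := ⟨_, rfl⟩
  have hu0 : u ≠ 0 := by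
    rintro rfl
    exact hu (by rw [← hu']; exact Submodule.zero_mem _)
  obtain ⟨d2, m2, h2, hv⟩ := hcon u
  obtain ⟨v, hv'⟩ : ∃ v, v = rcEv h2 d2 := ⟨_, rfl⟩
  rw [← hv'] at hv
  have hv0 : v ≠ 0 := by
    rintro rfl
    exact hv (Submodule.zero_mem _)
  obtain ⟨d, md, hd0, hd1⟩ : ∃ d ∈ D, d ≠ 0 ∧ rcEv h1 d = 0 := by
    let G := (rcEv h1 : U ⊗[K] Y →ₗ[K] U) ∘ₗ D.subtype
    have hr : finrank K (LinearMap.range G) ≤ 1 := by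
      refine le_trans (Submodule.finrank_mono (t := Submodule.span K {u}) ?_)
        (finrank_span_singleton hu0).le
      rintro _ ⟨⟨y, hy⟩, rfl⟩
      obtain ⟨c, hc⟩ := H h1 d1 m1 y hy (by rwa [← hu'])
      exact Submodule.mem_span_singleton.2 ⟨c, by rw [hu', hc]; rfl⟩
    have hrn := LinearMap.finrank_range_add_finrank_ker G
    have hpos : 0 < finrank K (LinearMap.ker G) := by omega
    have : Nontrivial (LinearMap.ker G) := (finrank_pos_iff (R := K)).1 hpos
    obtain ⟨x, hx⟩ := exists_ne (0 : LinearMap.ker G)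
    exact ⟨x.1.1, x.1.2, by simpa using hx, x.2⟩
  have hd2 : rcEv h2 d = 0 := by
    by_contra hne
    obtain ⟨c, hc⟩ := H h2 d md d1 m1 hne
    obtain ⟨e, he⟩ := H (h1 + h2) d md d1 m1 (by rwa [rcEv_add, hd1, zero_add])
    rw [rcEv_add, rcEv_add, hd1, zero_add, ← hc, ← hu'] at he
    obtain ⟨f, hf⟩ := H h2 d md d2 m2 hne
    have h3 : u = (e - c) • rcEv h2 d := by rw [sub_smul, he]; abel
    have h4 : e - c ≠ 0 := by
      intro h; rw [h, zero_smul] at h3; exact hu0 h3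
    apply hv
    refine Submodule.mem_span_singleton.2 ⟨f * (e - c)⁻¹, ?_⟩
    rw [h3, smul_smul, mul_assoc, inv_mul_cancel₀ h4, mul_one, hf, hv']
  obtain ⟨h3, hw⟩ : ∃ h3, rcEv h3 d ≠ 0 := by
    by_contra! hall
    exact hd0 (rcEv_eq_zero d hall)
  have gen : ∀ h, rcEv h d = 0 → ∀ d' ∈ D, ∃ c : K, c • rcEv h3 d = rcEv h d' := by
    intro h hh d' md'
    obtain ⟨c, hc⟩ := H h3 d md d' md' hw
    obtain ⟨e, he⟩ := H (h + h3) d md d' md' (by rwa [rcEv_add, hh, zero_add])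
    rw [rcEv_add, rcEv_add, hh, zero_add, ← hc] at he
    exact ⟨e - c, by rw [sub_smul, he]; abel⟩
  obtain ⟨α, hα⟩ := gen h1 hd1 d1 m1
  obtain ⟨β, hβ⟩ := gen h2 hd2 d2 m2
  rw [← hu'] at hα
  rw [← hv'] at hβ
  have hα0 : α ≠ 0 := by
    rintro rfl; exact hu0 (by rw [← hα, zero_smul])
  apply hv
  refine Submodule.mem_span_singleton.2 ⟨β * α⁻¹, ?_⟩
  rw [← hα, smul_smul, mul_assoc, inv_mul_cancel₀ hα0, mul_one, hβ]

lemma rc_line_local [FiniteDimensional K Y] [Nontrivial Y]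
    (T : U ⊗[K] Y →ₗ[K] W) (Φ : Y →ₗ[K] W) (hrc : ∀ y, ∃ x : U, Φ y = T (x ⊗ₜ[K] y)) (u : U)
    (hu : ∀ d ∈ LinearMap.ker T, ∀ h, rcEv h d ∈ Submodule.span K {u}) :
    ∃ X' : U, ∀ y, Φ y = T (X' ⊗ₜ[K] y) := by
  obtain ⟨y0, hy0⟩ := exists_ne (0 : Y)
  obtain ⟨X, hX⟩ := hrc y0
  obtain ⟨c, hc⟩ := rc_scalar (Φ - T ∘ₗ TensorProduct.mk K U Y X) (T ∘ₗ TensorProduct.mk K U Y u) (by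
    intro y
    simp only [LinearMap.sub_apply, LinearMap.comp_apply, TensorProduct.mk_apply]
    by_cases hy : ∃ s : K, s • y0 = y
    · obtain ⟨s, rfl⟩ := hy
      exact ⟨0, by simp [hX]⟩
    · push Not at hy
      have hli := (LinearIndependent.pair_iff' hy0).2 hy
      obtain ⟨g1, hg1⟩ := rc_dual hli 0
      obtain ⟨g2, hg2⟩ := rc_dual hli 1
      have a1 : g1 y0 = 1 := by simpa using hg1 0
      have a2 : g1 y = 0 := by simpa using hg1 1
      have a3 : g2 y0 = 0 := by simpa using hg2 0
      have a4 : g2 y = 1 := by simpa using hg2 1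
      obtain ⟨x, hx⟩ := hrc y
      obtain ⟨x', hx'⟩ := hrc (y0 + y)
      have hm : x' ⊗ₜ[K] (y0 + y) - X ⊗ₜ[K] y0 - x ⊗ₜ[K] y ∈ LinearMap.ker T := by
        rw [LinearMap.mem_ker, map_sub, map_sub, ← hX, ← hx, ← hx', map_add]; abel
      have b1 := hu _ hm g1
      have b2 := hu _ hm g2
      simp only [map_sub, rcEv_tmul, map_add, a1, a2, a3, a4, add_zero, zero_add, one_smul,
        zero_smul, sub_zero] at b1 b2
      obtain ⟨c, hc⟩ := Submodule.mem_span_singleton.1 (Submodule.sub_mem _ b1 b2)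
      refine ⟨c, ?_⟩
      rw [hx, ← map_smul, TensorProduct.smul_tmul', hc, ← map_sub, ← TensorProduct.sub_tmul]
      congr 2
      abel)
  refine ⟨X + c • u, fun y => ?_⟩
  have := LinearMap.congr_fun hc y
  simp only [LinearMap.sub_apply, LinearMap.comp_apply, TensorProduct.mk_apply,
    LinearMap.smul_apply] at this
  rw [TensorProduct.add_tmul, map_add, ← TensorProduct.smul_tmul', map_smul, ← this]
  abel

lemma rc_restrict [FiniteDimensional K U] [FiniteDimensional K Y] (T : U ⊗[K] Y →ₗ[K] W)
    (h : Y →ₗ[K] K) :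
    finrank K (LinearMap.ker (T ∘ₗ LinearMap.lTensor U (LinearMap.ker h).subtype)) +
      finrank K (LinearMap.range ((rcEv h : U ⊗[K] Y →ₗ[K] U) ∘ₗ (LinearMap.ker T).subtype)) ≤
    finrank K (LinearMap.ker T) := by
  rw [← LinearMap.finrank_range_add_finrank_ker
    ((rcEv h : U ⊗[K] Y →ₗ[K] U) ∘ₗ (LinearMap.ker T).subtype), add_comm]
  gcongr
  have hz : ∀ d : U ⊗[K] (LinearMap.ker h),
      rcEv h (LinearMap.lTensor U (LinearMap.ker h).subtype d) = 0 := by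
    intro d
    induction d with
    | zero => simp
    | tmul x y => simp [rcEv_tmul]
    | add a b ha hb => simp [ha, hb]
  let f : LinearMap.ker (T ∘ₗ LinearMap.lTensor U (LinearMap.ker h).subtype) →ₗ[K]
      LinearMap.ker T := LinearMap.codRestrict _
        (LinearMap.lTensor U (LinearMap.ker h).subtype ∘ₗ Submodule.subtype _) (fun d => d.2)
  let g := LinearMap.codRestrict
    (LinearMap.ker ((rcEv h : U ⊗[K] Y →ₗ[K] U) ∘ₗ (LinearMap.ker T).subtype)) f
    (fun d => hz d.1)
  refine LinearMap.finrank_le_finrank_of_injective (f := g) ?_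
  intro a b hab
  have h1 : LinearMap.lTensor U (LinearMap.ker h).subtype a.1 =
      LinearMap.lTensor U (LinearMap.ker h).subtype b.1 :=
    congrArg (fun x => x.1.1) hab
  exact Subtype.ext (Module.Flat.lTensor_preserves_injective_linearMap _
    (Submodule.injective_subtype _) h1)

lemma rc_good_restrict [FiniteDimensional K U] [FiniteDimensional K Y] (T : U ⊗[K] Y →ₗ[K] W)
    (h : Y →ₗ[K] K) (hg : rcGood (LinearMap.ker T) h) :
    finrank K (LinearMap.ker (T ∘ₗ LinearMap.lTensor U (LinearMap.ker h).subtype)) + 2 ≤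
    finrank K (LinearMap.ker T) := by
  refine le_trans ?_ (rc_restrict T h)
  gcongr
  obtain ⟨d1, m1, d2, m2, hli⟩ := hg
  have h1 := finrank_span_eq_card hli
  rw [Fintype.card_fin] at h1
  refine le_trans (le_of_eq h1.symm) ?_
  refine Submodule.finrank_mono (Submodule.span_le.2 ?_)
  rintro _ ⟨i, rfl⟩
  fin_cases i
  · exact ⟨⟨d1, m1⟩, rfl⟩
  · exact ⟨⟨d2, m2⟩, rfl⟩

end RC

theorem rc_main {K U W : Type*} [Field K] [AddCommGroup U] [Module K U]
    [AddCommGroup W] [Module K W] [FiniteDimensional K U] (hK : ∃ a : K, a ≠ 0 ∧ a ≠ 1) (n : ℕ) :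
    ∀ (Y : Type*) [AddCommGroup Y] [Module K Y] [FiniteDimensional K Y], finrank K Y = n →
    ∀ (T : U ⊗[K] Y →ₗ[K] W) (Φ : Y →ₗ[K] W) (_ : ∀ y, ∃ x : U, Φ y = T (x ⊗ₜ[K] y))
    (_ : finrank K (LinearMap.ker T) + 3 ≤ 2 * n), ∃ X : U, ∀ y, Φ y = T (X ⊗ₜ[K] y) := by
  induction n with
  | zero => intros; omega
  | succ n ih =>
    intro Y _ _ _ hY T Φ hrc hD
    have hn : 1 ≤ n := by omega
    have hker : ∀ h : Y →ₗ[K] K, h ≠ 0 → finrank K (LinearMap.ker h) = n := by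
      intro h hh
      have := LinearMap.finrank_range_add_finrank_ker h
      rw [LinearMap.range_eq_top.2 (LinearMap.surjective hh), finrank_top, finrank_self] at this
      omega
    -- locality on a hyperplane
    have step : ∀ h : Y →ₗ[K] K, h ≠ 0 →
        (n = 1 ∨ finrank K (LinearMap.ker (T ∘ₗ LinearMap.lTensor U (LinearMap.ker h).subtype)) + 3
          ≤ 2 * n) → ∃ X : U, ∀ y, h y = 0 → Φ y = T (X ⊗ₜ[K] y) := by
      intro h hh hc
      rcases hc with hc | hc
      · obtain ⟨v, hv0, hv⟩ := finrank_eq_one_iff'.1 ((hker h hh).trans hc)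
        obtain ⟨X, hX⟩ := hrc v
        refine ⟨X, fun y hy => ?_⟩
        obtain ⟨c, hc⟩ := hv ⟨y, hy⟩
        have : y = c • (v : Y) := by rw [← Submodule.coe_smul, hc]
        rw [this, map_smul, hX, TensorProduct.tmul_smul, map_smul]
      · obtain ⟨X, hX⟩ := ih (LinearMap.ker h) (hker h hh)
          (T ∘ₗ LinearMap.lTensor U (LinearMap.ker h).subtype) (Φ ∘ₗ (LinearMap.ker h).subtype)
          (fun y => by
            obtain ⟨x, hx⟩ := hrc y
            exact ⟨x, by simpa using hx⟩) hc
        exact ⟨X, fun y hy => by simpa using hX ⟨y, hy⟩⟩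
    have fin : ∀ h1 h2 : Y →ₗ[K] K, LinearIndependent K ![h1, h2] →
        (∀ h : Y →ₗ[K] K, h = h1 ∨ h = h2 → (n = 1 ∨
        finrank K (LinearMap.ker (T ∘ₗ LinearMap.lTensor U (LinearMap.ker h).subtype)) + 3
          ≤ 2 * n)) → ∃ X : U, ∀ y, Φ y = T (X ⊗ₜ[K] y) := by
      intro h1 h2 hli hc
      obtain ⟨X1, hX1⟩ := step h1 (hli.ne_zero 0) (hc h1 (Or.inl rfl))
      obtain ⟨X2, hX2⟩ := step h2 (hli.ne_zero 1) (hc h2 (Or.inr rfl))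
      exact rc_glue hK T Φ hrc h1 h2 hli X1 X2 hX1 hX2 (by omega)
    by_cases hsmall : n = 1 ∨ finrank K (LinearMap.ker T) + 3 ≤ 2 * n
    · obtain ⟨h1, h2, hli⟩ : ∃ h1 h2 : Y →ₗ[K] K, LinearIndependent K ![h1, h2] := by
        let b := Module.finBasisOfFinrankEq K Y hY
        refine ⟨b.coord ⟨0, by omega⟩, b.coord ⟨1, by omega⟩, ?_⟩
        rw [LinearIndependent.pair_iff]
        intro s t hst
        have a1 := LinearMap.congr_fun hst (b ⟨0, by omega⟩)
        have a2 := LinearMap.congr_fun hst (b ⟨1, by omega⟩)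
        simpa [Finsupp.single_apply] using And.intro a1 a2
      refine fin h1 h2 hli fun h _ => hsmall.imp id fun hs => ?_
      have := rc_restrict T h
      omega
    · push Not at hsmall
      by_cases hgood : ∃ h, rcGood (LinearMap.ker T) h
      · obtain ⟨h1, hg1⟩ := hgood
        obtain ⟨h2, hg2, hli⟩ := rc_two hK (by omega) _ h1 hg1
        refine fin h1 h2 hli fun h hh => Or.inr ?_
        have : rcGood (LinearMap.ker T) h := by
          rcases hh with rfl | rfl <;> assumption
        have := rc_good_restrict T h this
        omega
      · push Not at hgood
        obtain ⟨u, hu⟩ := rc_line _ hgood (by omega)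
        have : Nontrivial Y := finrank_pos_iff (R := K).1 (by omega)
        exact rc_line_local T Φ hrc u hu

theorem stmt_5 {K : Type*} [Field K] (hK : 2 < Cardinal.mk K)
    (n p : ℕ) (hn : 2 ≤ n) (hp : 2 ≤ p)
    (S : Submodule K (Matrix (Fin n) (Fin p) K))
    (hcodim : Module.finrank K (Matrix (Fin n) (Fin p) K ⧸ S) + 3 ≤ 2 * n)
    (F : S →ₗ[K] (Fin n → K))
    (hrc : ∀ M : S, F M ∈ Set.range (M : Matrix (Fin n) (Fin p) K).mulVec) :
    ∃ X : Fin p → K, ∀ M : S, F M = (M : Matrix (Fin n) (Fin p) K).mulVec X := by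
  have hK' : ∃ a : K, a ≠ 0 ∧ a ≠ 1 := by
    by_contra! h
    have h1 : (Set.univ : Set K) ⊆ {0, 1} := fun a _ => by
      by_cases ha : a = 0
      · simp [ha]
      · simp [h a ha]
    have h2 := Cardinal.mk_le_mk_of_subset h1
    rw [Cardinal.mk_univ] at h2
    have h3 : Cardinal.mk ({0, 1} : Set K) ≤ 2 := by
      refine Cardinal.mk_insert_le.trans ?_
      rw [Cardinal.mk_singleton, one_add_one_eq_two]
    exact absurd hK (not_lt.2 (h2.trans h3))
  let B : (Fin p → K) →ₗ[K] (Fin n → K) →ₗ[K] (S →ₗ[K] K) :=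
    LinearMap.mk₂ K (fun x y =>
      { toFun := fun M => y ⬝ᵥ ((M : Matrix (Fin n) (Fin p) K).mulVec x)
        map_add' := by intro a b; simp [Matrix.add_mulVec]
        map_smul' := by intro a b; simp [Matrix.smul_mulVec] })
      (by intro a b c; ext M; simp [Matrix.mulVec_add])
      (by intro a b c; ext M; simp [Matrix.mulVec_smul])
      (by intro a b c; ext M; simp)
      (by intro a b c; ext M; simp)
  let T := TensorProduct.lift B
  have hT : ∀ x y (M : S), T (x ⊗ₜ[K] y) M = y ⬝ᵥ ((M : Matrix (Fin n) (Fin p) K).mulVec x) := by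
    intro x y M; rfl
  let Φ : (Fin n → K) →ₗ[K] (S →ₗ[K] K) :=
    { toFun := fun y =>
        { toFun := fun M => y ⬝ᵥ F M
          map_add' := by intro a b; simp
          map_smul' := by intro a b; simp }
      map_add' := by intro a b; ext M; simp
      map_smul' := by intro a b; ext M; simp }
  have hΦ : ∀ y M, Φ y M = y ⬝ᵥ F M := fun y M => rfl
  have hsurj : LinearMap.range T = ⊤ := by
    rw [LinearMap.range_eq_top]
    intro f
    obtain ⟨g, hg⟩ := LinearMap.exists_extend f
    refine ⟨∑ i, ∑ j, g (Matrix.single i j 1) • ((Pi.single j 1 : Fin p → K) ⊗ₜ[K] (Pi.single i 1 : Fin n → K)), ?_⟩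
    ext M
    rw [← hg]
    simp only [map_sum, map_smul, LinearMap.sum_apply, LinearMap.smul_apply, hT]
    simp only [LinearMap.comp_apply, Submodule.subtype_apply]
    conv_rhs => rw [Matrix.matrix_eq_sum_single (M : Matrix (Fin n) (Fin p) K)]
    simp only [map_sum]
    refine Finset.sum_congr rfl fun i _ => Finset.sum_congr rfl fun j _ => ?_
    have : Matrix.single i j ((M : Matrix (Fin n) (Fin p) K) i j) =
      ((M : Matrix (Fin n) (Fin p) K) i j) • Matrix.single i j 1 := by simp
    rw [this, map_smul]
    simp [mul_comm]
  have hdim : finrank K (LinearMap.ker T) + 3 ≤ 2 * n := by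
    have h1 := LinearMap.finrank_range_add_finrank_ker T
    rw [hsurj, finrank_top, finrank_tensorProduct] at h1
    have h2 : finrank K (Dual K S) = finrank K S := Subspace.dual_finrank_eq
    unfold Dual at h2
    have h3 := Submodule.finrank_quotient_add_finrank S
    rw [Module.finrank_matrix] at h3
    simp only [finrank_fintype_fun_eq_card, Fintype.card_fin, finrank_self, mul_one] at h1 h3
    rw [mul_comm p n] at h1
    omega
  have hrc' : ∀ y, ∃ x, Φ y = T (x ⊗ₜ[K] y) := by
    intro y
    let R : S →ₗ[K] (Fin p → K) :=
      { toFun := fun M => Matrix.vecMul y (M : Matrix (Fin n) (Fin p) K)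
        map_add' := by intro a b; simp [Matrix.vecMul_add]
        map_smul' := by intro a b; simp [Matrix.vecMul_smul] }
    have hm : Φ y ∈ LinearMap.range R.dualMap := by
      rw [LinearMap.range_dualMap_eq_dualAnnihilator_ker, Submodule.mem_dualAnnihilator]
      intro M hM
      obtain ⟨x, hx⟩ := hrc M
      have hM : Matrix.vecMul y (M : Matrix (Fin n) (Fin p) K) = 0 := hM
      rw [hΦ, ← hx, Matrix.dotProduct_mulVec, hM, zero_dotProduct]
    obtain ⟨g, hg⟩ := hm
    refine ⟨fun j => g (Pi.single j 1), ?_⟩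
    ext M
    rw [hT, Matrix.dotProduct_mulVec, ← hg, LinearMap.dualMap_apply]
    conv_lhs => rw [pi_eq_sum_univ' (R M)]
    simp only [map_sum, map_smul, dotProduct, smul_eq_mul]
    rfl
  obtain ⟨X, hX⟩ := rc_main hK' n (Fin n → K) (by simp) T Φ hrc' hdim
  refine ⟨X, fun M => ?_⟩
  ext i
  have := LinearMap.congr_fun (hX (Pi.single i 1)) M
  rw [hT, hΦ] at this
  simpa using this
end
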